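/- Let X, Y be separable metrizable spaces, Z a topological space, and f : X × Y → Z a separately continuous function whose image f(X × Y) is a discrete subspace of Z. Then there exists a sequence (g_n)_{n∈ℕ} of jointly continuous functions g_n : X × Y → Z such that for every x ∈ X the sequence (g_n(x,·)) converges to f(x,·) uniformly on compact subsets of Y, and for every y ∈ Y the sequence (g_n(·,y)) converges to f(·,y) uniformly on compact subsets of X. -/

import Mathlib

/-!
For a basis `(B k)` of `Y`, let `S n` be the set of all `(x, y)` such that `f (x, ·)` is constant on
some `B k ∋ y` with `k < n`. For fixed `x`, a compact subset of `{x} × Y` is contained in `S n` for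
all large `n`, so it is enough to find continuous functions `g n` that agree with `f` on `S n` and
on the analogous set `T n` obtained by exchanging the roles of `X` and `Y`.

Each point `w` has a clopen neighbourhood on which `f` takes the value `f w` at all points of
`S n ∪ T n`: such neighbourhoods are cut out by finitely many conditions on the sections of `f`.
Countably many of these neighbourhoods cover the Lindelöf space `X × Y`, and making them disjoint
glues the constants `f w` to a locally constant function.
-/

open Set Filter TopologicalSpace

section ClopenCover

variable {W ι Z : Type*} [TopologicalSpace W]

theorem isClopen_disjointed {s : ℕ → Set W} (hs : ∀ n, IsClopen (s n)) (n : ℕ) :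
    IsClopen (disjointed s n) :=
  disjointedRec (fun _ i ht => ht.diff (hs i)) (hs n)

theorem exists_isLocallyConstant_nat_index {s : ℕ → Set W} (hs : ∀ n, IsClopen (s n))
    (hcover : ∀ w, ∃ n, w ∈ s n) : ∃ r : W → ℕ, IsLocallyConstant r ∧ ∀ w, w ∈ s (r w) := by
  classical
  refine ⟨fun w => Nat.find (hcover w), IsLocallyConstant.iff_isOpen_fiber.2 fun n => ?_,
    fun w => Nat.find_spec (hcover w)⟩
  rw [preimage_find_eq_disjointed]
  exact (isClopen_disjointed hs n).isOpen

theorem exists_isLocallyConstant_index [LindelofSpace W] {s : ι → Set W}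
    (hs : ∀ i, IsClopen (s i)) (hcover : ∀ w, ∃ i, w ∈ s i) :
    ∃ r : W → ι, IsLocallyConstant r ∧ ∀ w, w ∈ s (r w) := by
  rcases isEmpty_or_nonempty W with hW | ⟨⟨w₀⟩⟩
  · exact ⟨isEmptyElim, .of_constant _ isEmptyElim, isEmptyElim⟩
  have : Nonempty ι := (hcover w₀).nonempty
  obtain ⟨u, hu⟩ := isLindelof_univ.indexed_countable_subcover s (fun i => (hs i).isOpen)
    fun w _ => mem_iUnion.2 (hcover w)
  obtain ⟨r, hr, hmem⟩ := exists_isLocallyConstant_nat_index (fun n => hs (u n))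
    fun w => mem_iUnion.1 (hu (mem_univ w))
  exact ⟨u ∘ r, hr.comp u, hmem⟩

/-- `f` is clopen-locally constant along `S`: every point `w` has a clopen neighbourhood `C` such
that `f` takes the value `f w` on `C ∩ S`. Clopen neighbourhoods serve to glue these values over
the whole space. The points `w ∉ S` are included, with `f w` still the prescribed value, so that the
property is stable under finite unions of sets `S`. -/
def ClopenConstAlong (f : W → Z) (S : Set W) : Prop :=
  ∀ w, ∃ C, IsClopen C ∧ w ∈ C ∧ ∀ p ∈ C ∩ S, f p = f w

namespace ClopenConstAlong

variable {f : W → Z} {S T : Set W}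

theorem union (hS : ClopenConstAlong f S) (hT : ClopenConstAlong f T) :
    ClopenConstAlong f (S ∪ T) := by
  intro w
  obtain ⟨C, hC, hwC, hfC⟩ := hS w
  obtain ⟨D, hD, hwD, hfD⟩ := hT w
  refine ⟨C ∩ D, hC.inter hD, ⟨hwC, hwD⟩, ?_⟩
  rintro p ⟨⟨hpC, hpD⟩, hpS | hpT⟩
  · exact hfC p ⟨hpC, hpS⟩
  · exact hfD p ⟨hpD, hpT⟩

theorem biUnion {I : Set ι} (hI : I.Finite) {S : ι → Set W}
    (hS : ∀ i ∈ I, ClopenConstAlong f (S i)) : ClopenConstAlong f (⋃ i ∈ I, S i) := by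
  intro w
  choose! C hC hwC hfC using fun i hi => hS i hi w
  refine ⟨⋂ i ∈ I, C i, hI.isClopen_biInter hC, mem_iInter₂.2 hwC, ?_⟩
  rintro p ⟨hpC, hpS⟩
  obtain ⟨i, hi, hpi⟩ := mem_iUnion₂.1 hpS
  exact hfC i hi p ⟨mem_iInter₂.1 hpC i hi, hpi⟩

theorem comp_continuous {V : Type*} [TopologicalSpace V] (hS : ClopenConstAlong f S) {φ : V → W}
    (hφ : Continuous φ) : ClopenConstAlong (f ∘ φ) (φ ⁻¹' S) := by
  intro v
  obtain ⟨C, hC, hvC, hfC⟩ := hS (φ v)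
  exact ⟨φ ⁻¹' C, hC.preimage hφ, hvC, fun p hp => hfC (φ p) hp⟩

theorem exists_isLocallyConstant_eqOn [LindelofSpace W] (hS : ClopenConstAlong f S) :
    ∃ g : W → Z, IsLocallyConstant g ∧ EqOn g f S := by
  choose C hC hmem hf using hS
  obtain ⟨r, hr, hrC⟩ := exists_isLocallyConstant_index hC fun w => ⟨w, hmem w⟩
  exact ⟨f ∘ r, hr.comp f, fun p hp => (hf (r p) p ⟨hrC p, hp⟩).symm⟩

end ClopenConstAlong

end ClopenCover

section ConstFibers

variable {X Y Z : Type*}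

/-- The part of the strip `X × B` consisting of those fibres `{x} × B` on which `f` is constant. -/
def constFibers (f : X × Y → Z) (B : Set Y) : Set (X × Y) :=
  {p | p.2 ∈ B ∧ ∀ y ∈ B, f (p.1, y) = f p}

variable [TopologicalSpace Y] {f : X × Y → Z}

theorem eventually_forall_mem_iUnion_constFibers {B : ℕ → Set Y}
    (hB : IsTopologicalBasis (range B)) {x : X} (hfx : IsLocallyConstant fun y => f (x, y))
    {K : Set Y} (hK : IsCompact K) :
    ∀ᶠ n in atTop, ∀ y ∈ K, (x, y) ∈ ⋃ k ∈ Iio n, constFibers f (B k) := by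
  refine hK.induction_on ?_ (fun _ _ hst ht => ht.mono fun n hn y hy => hn y (hst hy)) ?_ ?_
  · exact .of_forall fun _ _ => False.elim
  · intro s t hs ht
    filter_upwards [hs, ht] with n hsn htn y hy
    exact hy.elim (hsn y) (htn y)
  · intro y _
    obtain ⟨_, ⟨k, rfl⟩, hyk, hconst⟩ :=
      hB.exists_subset_of_mem_open (show y ∈ {z | f (x, z) = f (x, y)} from rfl)
        (hfx.isOpen_fiber (f (x, y)))
    refine ⟨B k, mem_nhdsWithin_of_mem_nhds (hB.mem_nhds (mem_range_self k) hyk), ?_⟩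
    filter_upwards [eventually_gt_atTop k] with n hn z hz
    exact mem_biUnion hn ⟨hz, fun z' hz' => (hconst hz').trans (hconst hz).symm⟩

variable [TopologicalSpace X]

theorem clopenConstAlong_constFibers (hfx : ∀ x, IsLocallyConstant fun y => f (x, y))
    (hfy : ∀ y, IsLocallyConstant fun x => f (x, y)) (B : Set Y) :
    ClopenConstAlong f (constFibers f B) := by
  rintro ⟨x, y⟩
  have isClopen_left (b : Y) : IsClopen {p : X × Y | f (p.1, b) = f (x, b)} :=
    ((hfy b).isClopen_fiber (f (x, b))).preimage continuous_fst
  have isClopen_right : IsClopen {p : X × Y | f (x, p.2) = f (x, y)} :=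
    ((hfx x).isClopen_fiber (f (x, y))).preimage continuous_snd
  by_cases hconst : ∀ b ∈ B, ∀ b' ∈ B, f (x, b) = f (x, b')
  · rcases B.eq_empty_or_nonempty with rfl | ⟨b, hb⟩
    · exact ⟨univ, isClopen_univ, mem_univ _, fun p hp => hp.2.1.elim⟩
    refine ⟨_, (isClopen_left b).inter isClopen_right, ⟨rfl, rfl⟩, ?_⟩
    rintro p ⟨⟨hleft, hright⟩, hpB, hp⟩
    calc f p = f (p.1, b) := (hp b hb).symm
      _ = f (x, b) := hleft
      _ = f (x, p.2) := hconst b hb p.2 hpB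
      _ = f (x, y) := hright
  · -- Two distinct values of `f (x, ·)` on `B` persist near `x`, so `C` misses `constFibers f B`.
    push Not at hconst
    obtain ⟨b, hb, b', hb', hne⟩ := hconst
    refine ⟨_, (isClopen_left b).inter (isClopen_left b'), ⟨rfl, rfl⟩, ?_⟩
    rintro p ⟨⟨hleft, hleft'⟩, -, hp⟩
    refine absurd ?_ hne
    calc f (x, b) = f (p.1, b) := hleft.symm
      _ = f (p.1, b') := (hp b hb).trans (hp b' hb').symm
      _ = f (x, b') := hleft'

theorem exists_seq_isLocallyConstant_eventually_eq [SecondCountableTopology X]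
    [SecondCountableTopology Y] (hfx : ∀ x, IsLocallyConstant fun y => f (x, y))
    (hfy : ∀ y, IsLocallyConstant fun x => f (x, y)) :
    ∃ g : ℕ → X × Y → Z, (∀ n, IsLocallyConstant (g n)) ∧
      (∀ x, ∀ K : Set Y, IsCompact K → ∀ᶠ n in atTop, ∀ y ∈ K, g n (x, y) = f (x, y)) ∧
      (∀ y, ∀ K : Set X, IsCompact K → ∀ᶠ n in atTop, ∀ x ∈ K, g n (x, y) = f (x, y)) := by
  obtain ⟨A, hA⟩ := exists_seq_basis X
  obtain ⟨B, hB⟩ := exists_seq_basis Y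
  let S (n : ℕ) : Set (X × Y) := ⋃ k ∈ Iio n, constFibers f (B k)
  let T (n : ℕ) : Set (Y × X) := ⋃ k ∈ Iio n, constFibers (f ∘ Prod.swap) (A k)
  have hS (n : ℕ) : ClopenConstAlong f (S n) :=
    .biUnion (finite_Iio n) fun k _ => clopenConstAlong_constFibers hfx hfy (B k)
  have hT (n : ℕ) : ClopenConstAlong (f ∘ Prod.swap) (T n) :=
    .biUnion (finite_Iio n) fun k _ => clopenConstAlong_constFibers hfy hfx (A k)
  choose g hg hgf using fun n =>
    ((hS n).union ((hT n).comp_continuous continuous_swap)).exists_isLocallyConstant_eqOn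
  refine ⟨g, hg, fun x K hK => ?_, fun y K hK => ?_⟩
  · filter_upwards [eventually_forall_mem_iUnion_constFibers hB (hfx x) hK] with n hn y hy
    exact hgf n (.inl (hn y hy))
  · have hKT : ∀ᶠ n in atTop, ∀ x ∈ K, (y, x) ∈ T n :=
      eventually_forall_mem_iUnion_constFibers hA (hfy y) hK
    filter_upwards [hKT] with n hn x hx
    exact hgf n (.inr (hn x hx))

end ConstFibers

theorem isLocallyConstant_of_forall_mem {W Z : Type*} [TopologicalSpace W] [TopologicalSpace Z]
    {D : Set Z} [DiscreteTopology D] {h : W → Z} (hh : Continuous h) (hD : ∀ w, h w ∈ D) :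
    IsLocallyConstant h :=
  ((IsLocallyConstant.iff_continuous _).2 (hh.subtype_mk hD)).comp Subtype.val

theorem secondCountableTopology_of_separableSpace (W : Type*) [TopologicalSpace W]
    [PseudoMetrizableSpace W] [SeparableSpace W] : SecondCountableTopology W :=
  let := pseudoMetrizableSpacePseudoMetric W
  UniformSpace.secondCountable_of_separable W

theorem stmt13_general {X Y Z : Type*} [TopologicalSpace X] [TopologicalSpace Y]
    [TopologicalSpace Z] [SecondCountableTopology X] [SecondCountableTopology Y] (f : X × Y → Z)
    (hfx : ∀ x : X, Continuous fun y : Y => f (x, y))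
    (hfy : ∀ y : Y, Continuous fun x : X => f (x, y))
    (hdisc : DiscreteTopology ↥(Set.range f)) :
    ∃ g : ℕ → X × Y → Z, (∀ n, Continuous (g n)) ∧
      (∀ x : X, ∀ K : Set Y, IsCompact K → ∀ U : Set Z, IsOpen U →
        (∀ y ∈ K, f (x, y) ∈ U) →
        ∀ᶠ n in Filter.atTop, ∀ y ∈ K, g n (x, y) ∈ U) ∧
      (∀ y : Y, ∀ K : Set X, IsCompact K → ∀ U : Set Z, IsOpen U →
        (∀ x ∈ K, f (x, y) ∈ U) →
        ∀ᶠ n in Filter.atTop, ∀ x ∈ K, g n (x, y) ∈ U) := by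
  obtain ⟨g, hg, hgx, hgy⟩ := exists_seq_isLocallyConstant_eventually_eq
    (fun x => isLocallyConstant_of_forall_mem (hfx x) fun y => mem_range_self (x, y))
    (fun y => isLocallyConstant_of_forall_mem (hfy y) fun x => mem_range_self (x, y))
  refine ⟨g, fun n => (hg n).continuous, fun x K hK U _ hU => ?_, fun y K hK U _ hU => ?_⟩
  · filter_upwards [hgx x K hK] with n hn y hy
    exact hn y hy ▸ hU y hy
  · filter_upwards [hgy y K hK] with n hn x hx
    exact hn x hx ▸ hU x hx

theorem stmt13 {X Y Z : Type*} [TopologicalSpace X] [TopologicalSpace Y] [TopologicalSpace Z]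
    [TopologicalSpace.SeparableSpace X] [TopologicalSpace.SeparableSpace Y]
    [TopologicalSpace.MetrizableSpace X] [TopologicalSpace.MetrizableSpace Y]
    (f : X × Y → Z)
    (hfx : ∀ x : X, Continuous fun y : Y => f (x, y))
    (hfy : ∀ y : Y, Continuous fun x : X => f (x, y))
    (hdisc : DiscreteTopology ↥(Set.range f)) :
    ∃ g : ℕ → X × Y → Z, (∀ n, Continuous (g n)) ∧
      (∀ x : X, ∀ K : Set Y, IsCompact K → ∀ U : Set Z, IsOpen U →
        (∀ y ∈ K, f (x, y) ∈ U) →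
        ∀ᶠ n in Filter.atTop, ∀ y ∈ K, g n (x, y) ∈ U) ∧
      (∀ y : Y, ∀ K : Set X, IsCompact K → ∀ U : Set Z, IsOpen U →
        (∀ x ∈ K, f (x, y) ∈ U) →
        ∀ᶠ n in Filter.atTop, ∀ x ∈ K, g n (x, y) ∈ U) := by
  have : SecondCountableTopology X := secondCountableTopology_of_separableSpace X
  have : SecondCountableTopology Y := secondCountableTopology_of_separableSpace Y
  exact stmt13_general f hfx hfy hdisc
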